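/- Every continuous linear functional Λ on 𝒞([-T,0]) (continuous with respect to the convergence: uniform boundedness, uniform convergence on compacts of [-T,0[, and convergence at 0) admits a unique representation Λη = ∫_{[-T,0]} η(x) μ(dx) for all η ∈ 𝒞([-T,0]), where μ is a finite signed Borel measure on [-T,0]. -/

import Mathlib

open MeasureTheory Filter Topology Set

/-- Membership in `𝒞([-T,0])`: bounded on `[-T,0]` and continuous on `[-T,0[`. -/
def memScrC (T : ℝ) (η : ℝ → ℝ) : Prop :=
  (∃ C, ∀ x ∈ Set.Icc (-T) (0:ℝ), |η x| ≤ C) ∧ ContinuousOn η (Set.Ico (-T) 0)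

open scoped NNReal ENNReal CompactlySupported

def Adm8 (T : ℝ) (f : ℝ → ℝ) : Prop := memScrC T f ∧ ∀ x ∈ Set.Icc (-T) (0:ℝ), 0 ≤ f x

/-- Convergence to zero in `𝒞([-T,0])`. -/
def ConvZ8 (T : ℝ) (g : ℕ → ℝ → ℝ) : Prop :=
  (∃ C, ∀ k, ∀ x ∈ Set.Icc (-T) (0:ℝ), |g k x| ≤ C) ∧
  (∀ K ⊆ Set.Ico (-T) (0:ℝ), IsCompact K → TendstoUniformlyOn g (fun _ => 0) atTop K) ∧
  Tendsto (fun k => g k 0) atTop (𝓝 0)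

structure PosFun8 (T : ℝ) (P : (ℝ → ℝ) → ℝ) : Prop where
  congr : ∀ f g, Set.EqOn f g (Set.Icc (-T) 0) → Adm8 T f → Adm8 T g → P f = P g
  nonneg : ∀ f, Adm8 T f → 0 ≤ P f
  add : ∀ f g, Adm8 T f → Adm8 T g → P (f + g) = P f + P g
  smul : ∀ (c : ℝ) f, 0 ≤ c → Adm8 T f → P (c • f) = c * P f
  cont : ∀ g : ℕ → ℝ → ℝ, (∀ k, Adm8 T (g k)) → ConvZ8 T g →
    Tendsto (fun k => P (g k)) atTop (𝓝 0)

lemma integrable8 {T : ℝ} {f : ℝ → ℝ} (hf : memScrC T f) (μ : Measure ℝ) [IsFiniteMeasure μ] :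
    IntegrableOn f (Set.Icc (-T) 0) μ := by
  obtain ⟨⟨C, hC⟩, hc⟩ := hf
  have hm : AEStronglyMeasurable f (μ.restrict (Set.Ico (-T) 0 ∪ {0})) := by
    rw [aestronglyMeasurable_union_iff]
    refine ⟨hc.aestronglyMeasurable measurableSet_Ico, ?_⟩
    refine (aestronglyMeasurable_const (b := f 0)).congr ?_
    filter_upwards [ae_restrict_mem (measurableSet_singleton (0:ℝ))] with x hx
    rw [hx]
  have hsub : Set.Icc (-T) 0 ⊆ Set.Ico (-T) 0 ∪ {0} := by
    intro x hx
    rcases eq_or_lt_of_le hx.2 with h | h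
    · right; exact h
    · left; exact ⟨hx.1, h⟩
  refine Integrable.of_bound (hm.mono_set hsub) C ?_
  filter_upwards [ae_restrict_mem measurableSet_Icc] with x hx
  exact hC x hx

lemma memScrC_of_lt8 {T : ℝ} {f : ℝ → ℝ} {C : ℝ} (h : ∀ x ∈ Set.Icc (-T) (0:ℝ), |f x| ≤ C)
    (hc : ContinuousOn f (Set.Ico (-T) 0)) : memScrC T f := ⟨⟨C, h⟩, hc⟩

lemma posRep8 {T : ℝ} (hT : 0 < T) {P : (ℝ → ℝ) → ℝ} (hP : PosFun8 T P) :
    ∃ μ : Measure ℝ, IsFiniteMeasure μ ∧ μ (Set.Icc (-T) 0)ᶜ = 0 ∧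
      ∀ f, Adm8 T f → P f = ∫ x in Set.Icc (-T) 0, f x ∂μ := by
  have hT' : -T ≤ 0 := by linarith
  let X := Set.Icc (-T) (0:ℝ)
  let E : C_c(X, ℝ≥0) → ℝ → ℝ := fun f x =>
    if x = 0 then 0 else (f (Set.projIcc (-T) 0 hT' x) : ℝ)
  have hE : ∀ f, Adm8 T (E f) := by
    intro f
    have hb : ∃ C, ∀ x : X, |(f x : ℝ)| ≤ C := by
      have hcomp : IsCompact (Set.range fun x : X => (f x : ℝ)) :=
        isCompact_range (by fun_prop)
      obtain ⟨C, hC⟩ := hcomp.isBounded.exists_norm_le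
      exact ⟨C, fun x => hC _ ⟨x, rfl⟩⟩
    obtain ⟨C, hC⟩ := hb
    refine ⟨⟨⟨C, fun x hx => ?_⟩, ?_⟩, fun x hx => ?_⟩
    · by_cases h : x = 0
      · simp only [E, h, if_true, abs_zero]; exact (abs_nonneg _).trans (hC ⟨0, hT', le_rfl⟩)
      · simp only [E, h, if_false]; exact hC _
    · have : Continuous fun x : ℝ => (f (Set.projIcc (-T) 0 hT' x) : ℝ) := by
        have := continuous_projIcc (h := hT')
        fun_prop
      refine this.continuousOn.congr fun x hx => ?_
      simp [E, hx.2.ne]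
    · simp only [E]; split_ifs <;> simp
  let L : C_c(X, ℝ≥0) →ₗ[ℝ≥0] ℝ≥0 :=
    { toFun := fun f => ⟨P (E f), hP.nonneg _ (hE f)⟩
      map_add' := by
        intro f g
        apply NNReal.eq
        change P (E (f + g)) = P (E f) + P (E g)
        rw [← hP.add _ _ (hE f) (hE g)]
        congr 1
        funext x
        simp only [E, Pi.add_apply]
        split_ifs <;> simp
      map_smul' := by
        intro c f
        apply NNReal.eq
        change P (E (c • f)) = c * P (E f)
        refine Eq.trans ?_ (hP.smul _ _ c.2 (hE f))
        congr 1
        funext x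
        simp only [E, Pi.smul_apply]
        split_ifs <;> simp }
  let ν : Measure X := NNRealRMK.rieszMeasure L
  have hν : ∀ f : C_c(X, ℝ≥0), ∫ x, (f x : ℝ) ∂ν = P (E f) := fun f =>
    NNRealRMK.integral_rieszMeasure L f
  have : IsFiniteMeasure ν := by
    have : ν.Regular := NNRealRMK.rieszMeasure_regular L
    exact CompactSpace.isFiniteMeasure
  let z : X := ⟨0, hT', le_rfl⟩
  let δ : ℝ → ℝ := fun x => if x = 0 then 1 else 0
  have hδ : Adm8 T δ := by
    refine ⟨⟨⟨1, fun x hx => ?_⟩, ?_⟩, fun x hx => ?_⟩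
    · simp only [δ]; split_ifs <;> simp
    · refine (continuousOn_const (c := (0:ℝ))).congr fun x hx => ?_
      simp [δ, hx.2.ne]
    · simp only [δ]; split_ifs <;> simp
  let μ₁ : Measure ℝ := (ν.restrict {z}ᶜ).map Subtype.val
  let μ₂ : Measure ℝ := ENNReal.ofReal (P δ) • Measure.dirac 0
  have : IsFiniteMeasure μ₂ := by
    refine ⟨?_⟩
    simp [μ₂]
  have hemb : MeasurableEmbedding (Subtype.val : X → ℝ) :=
    MeasurableEmbedding.subtype_coe measurableSet_Icc
  have h0 : (0:ℝ) ∈ Set.Icc (-T) 0 := by simp [hT']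
  refine ⟨μ₁ + μ₂, inferInstance, ?_, ?_⟩
  · have h1 : μ₁ (Set.Icc (-T) 0)ᶜ = 0 := by
      rw [hemb.map_apply]
      have : (Subtype.val : X → ℝ) ⁻¹' (Set.Icc (-T) 0)ᶜ = ∅ := by
        ext x; simp only [Set.mem_preimage, Set.mem_compl_iff, Set.mem_empty_iff_false, iff_false,
          not_not]; exact x.2
      rw [this, measure_empty]
    have h2 : μ₂ (Set.Icc (-T) 0)ᶜ = 0 := by
      simp [μ₂, hT.le]
    rw [Measure.add_apply, h1, h2, add_zero]
  intro f hf
  obtain ⟨⟨⟨C, hC⟩, hfc⟩, hf0⟩ := id hf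
  have hC0 : 0 ≤ C := (abs_nonneg _).trans (hC 0 h0)
  let f₀ : ℝ → ℝ := fun x => if x = 0 then 0 else f x
  have hf₀c : ContinuousOn f₀ (Set.Ico (-T) 0) :=
    hfc.congr fun x hx => by simp [f₀, hx.2.ne]
  have hf₀b : ∀ x ∈ Set.Icc (-T) (0:ℝ), |f₀ x| ≤ C := by
    intro x hx
    simp only [f₀]; split_ifs
    · simpa using hC0
    · exact hC x hx
  have hf₀n : ∀ x ∈ Set.Icc (-T) (0:ℝ), 0 ≤ f₀ x := by
    intro x hx
    simp only [f₀]; split_ifs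
    · exact le_rfl
    · exact hf0 x hx
  have hf₀ : Adm8 T f₀ := ⟨⟨⟨C, hf₀b⟩, hf₀c⟩, hf₀n⟩
  have hsplit : P f = P f₀ + f 0 * P δ := by
    have hs : Adm8 T (f 0 • δ) := by
      refine ⟨⟨⟨|f 0|, fun x hx => ?_⟩, ?_⟩, fun x hx => ?_⟩
      · simp only [δ, Pi.smul_apply]; split_ifs <;> simp
      · exact hδ.1.2.const_smul _
      · exact mul_nonneg (hf0 0 h0) (hδ.2 x hx)
    rw [← hP.smul _ _ (hf0 0 h0) hδ, ← hP.add _ _ hf₀ hs]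
    congr 1
    funext x
    by_cases h : x = 0 <;> simp [f₀, δ, h]
  -- the cutoffs
  let a : ℕ → ℝ := fun n => T / (n + 1)
  have ha : ∀ n, 0 < a n := fun n => by positivity
  have haT : ∀ n, a n ≤ T := fun n => by
    apply div_le_self hT.le
    have : (0:ℝ) ≤ n := n.cast_nonneg
    linarith
  have hlim : Tendsto a atTop (𝓝 0) := by
    have := (tendsto_add_atTop_iff_nat 1).2 (tendsto_const_div_atTop_nhds_zero_nat T)
    simpa [a] using this
  have hsmall : ∀ ε > 0, ∀ᶠ n in atTop, 2 * a n ≤ ε := by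
    intro ε hε
    have : ∀ᶠ n in atTop, a n < ε / 2 := hlim.eventually (gt_mem_nhds (by linarith))
    filter_upwards [this] with n hn
    linarith
  let c : ℕ → ℝ → ℝ := fun n x => max 0 (min 1 (-x / a n - 1))
  have hc0 : ∀ n x, 0 ≤ c n x := fun n x => le_max_left _ _
  have hc1 : ∀ n x, c n x ≤ 1 := fun n x => max_le zero_le_one (min_le_left _ _)
  have hcc : ∀ n, Continuous (c n) := fun n => by fun_prop
  have hcz : ∀ n x, -a n ≤ x → c n x = 0 := by
    intro n x hx
    apply max_eq_left
    apply (min_le_right _ _).trans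
    have : -x / a n ≤ 1 := by rw [div_le_one (ha n)]; linarith
    linarith
  have hco : ∀ n x, 2 * a n ≤ -x → c n x = 1 := by
    intro n x hx
    have : 2 ≤ -x / a n := by rw [le_div_iff₀ (ha n)]; exact hx
    simp only [c]
    rw [min_eq_left (by linarith), max_eq_right zero_le_one]
  let H : ℕ → C_c(X, ℝ≥0) := fun n =>
    ⟨⟨fun x => Real.toNNReal (c n x * f (min (x:ℝ) (-a n))), by
      refine continuous_real_toNNReal.comp (((hcc n).comp continuous_subtype_val).mul ?_)
      refine hfc.comp_continuous (by fun_prop) fun x => ?_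
      refine ⟨le_min x.2.1 (by linarith [haT n]), (min_le_right _ _).trans_lt (by linarith [ha n])⟩⟩,
      HasCompactSupport.of_compactSpace _⟩
  have hH : ∀ n (x : X), (H n x : ℝ) = c n x * f₀ x := by
    intro n x
    change ((Real.toNNReal (c n x * f (min (x:ℝ) (-a n))) : ℝ≥0) : ℝ) = _
    by_cases h : -a n ≤ (x:ℝ)
    · rw [hcz n x h]; simp
    · push Not at h
      have hx0 : (x:ℝ) ≠ 0 := by linarith [ha n]
      rw [min_eq_left h.le, Real.coe_toNNReal _ (mul_nonneg (hc0 n x) (hf0 x x.2))]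
      simp [f₀, hx0]
  have hEH : ∀ n, ∀ x ∈ Set.Icc (-T) (0:ℝ), E (H n) x = c n x * f₀ x := by
    intro n x hx
    by_cases h : x = 0
    · simp [E, f₀, h]
    · simp only [E, h, if_false]
      rw [Set.projIcc_of_mem hT' hx, hH]
  let g : ℕ → ℝ → ℝ := fun n x => (1 - c n x) * f₀ x
  have hgb : ∀ n, ∀ x ∈ Set.Icc (-T) (0:ℝ), |g n x| ≤ C := by
    intro n x hx
    simp only [g]
    rw [abs_mul, abs_of_nonneg (by linarith [hc1 n x])]
    have := mul_le_mul (show 1 - c n x ≤ 1 by linarith [hc0 n x]) (hf₀b x hx) (abs_nonneg _)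
      zero_le_one
    linarith
  have hg : ∀ n, Adm8 T (g n) := fun n =>
    ⟨⟨⟨C, hgb n⟩, ((continuous_const.sub (hcc n)).continuousOn).mul hf₀c⟩,
      fun x hx => mul_nonneg (by linarith [hc1 n x]) (hf₀n x hx)⟩
  have hgz : ConvZ8 T g := by
    refine ⟨⟨C, hgb⟩, fun K hK hKc => ?_, ?_⟩
    · have : ∃ ε > 0, ∀ x ∈ K, ε ≤ -x := by
        rcases K.eq_empty_or_nonempty with rfl | hne
        · exact ⟨1, one_pos, by simp⟩
        · obtain ⟨m, hm, hmax⟩ := hKc.exists_isMaxOn hne continuousOn_id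
          exact ⟨-m, by linarith [(hK hm).2], fun x hx => by
            have : x ≤ m := hmax hx
            linarith⟩
      obtain ⟨ε, hε, hεK⟩ := this
      rw [Metric.tendstoUniformlyOn_iff]
      intro e he
      filter_upwards [hsmall ε hε] with n hn x hx
      simp only [g]
      rw [hco n x (hn.trans (hεK x hx))]
      simpa using he
    · simp [g, f₀]
  have hPg := hP.cont g hg hgz
  have hdec : ∀ n, P f₀ = ∫ x, (H n x : ℝ) ∂ν + P (g n) := by
    intro n
    rw [hν, ← hP.add _ _ (hE _) (hg n)]
    refine hP.congr _ _ (fun x hx => ?_) hf₀ ?_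
    · simp only [Pi.add_apply]
      rw [hEH n x hx]; simp only [g]; ring
    · refine ⟨⟨⟨C + C, fun x hx => ?_⟩, (hE (H n)).1.2.add (hg n).1.2⟩,
        fun x hx => add_nonneg ((hE _).2 x hx) ((hg n).2 x hx)⟩
      refine (abs_add_le _ _).trans (add_le_add ?_ (hgb n x hx))
      rw [hEH n x hx, abs_mul, abs_of_nonneg (hc0 n x)]
      have := mul_le_mul (hc1 n x) (hf₀b x hx) (abs_nonneg _) zero_le_one
      linarith
  have hDCT : Tendsto (fun n => ∫ x, (H n x : ℝ) ∂ν) atTop (𝓝 (∫ x : X, f₀ x ∂ν)) := by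
    refine tendsto_integral_of_dominated_convergence (fun _ => C) (fun n => ?_)
      (integrable_const _) (fun n => ?_) ?_
    · have : Continuous fun x : X => (H n x : ℝ) := by fun_prop
      exact this.aestronglyMeasurable
    · refine Eventually.of_forall fun x => ?_
      rw [hH, Real.norm_eq_abs, abs_mul, abs_of_nonneg (hc0 n x)]
      have := mul_le_mul (hc1 n x) (hf₀b x x.2) (abs_nonneg _) zero_le_one
      linarith
    · refine Eventually.of_forall fun x => ?_
      simp_rw [hH]
      by_cases h : (x:ℝ) = 0
      · simp [f₀, h]
      · have hx : 0 < -(x:ℝ) := by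
          have := lt_of_le_of_ne x.2.2 h
          linarith
        refine tendsto_const_nhds.congr' ?_
        filter_upwards [hsmall _ hx] with n hn
        rw [hco n x hn, one_mul]
  have hPf₀ : P f₀ = ∫ x : X, f₀ x ∂ν := by
    have h1 := hDCT.add hPg
    simp_rw [← hdec, add_zero] at h1
    exact tendsto_nhds_unique tendsto_const_nhds h1
  have hI1 : ∫ x in Set.Icc (-T) 0, f x ∂μ₁ = ∫ x : X, f₀ x ∂ν := by
    rw [hemb.setIntegral_map]
    have : (Subtype.val : X → ℝ) ⁻¹' (Set.Icc (-T) 0) = Set.univ := by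
      ext x; simp only [Set.mem_preimage, Set.mem_univ, iff_true]; exact x.2
    rw [this, Measure.restrict_univ, ← integral_indicator (measurableSet_singleton z).compl]
    congr 1
    funext x
    by_cases h : x = z
    · simp [h, f₀, z]
    · have : (x:ℝ) ≠ 0 := fun h' => h (Subtype.ext h')
      rw [Set.indicator_of_mem (by simpa using h)]
      simp [f₀, this]
  have hI2 : ∫ x in Set.Icc (-T) 0, f x ∂μ₂ = f 0 * P δ := by
    simp only [μ₂]
    rw [Measure.restrict_smul, integral_smul_measure, ENNReal.toReal_ofReal (hP.nonneg _ hδ),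
      setIntegral_dirac, if_pos h0, smul_eq_mul, mul_comm]
  rw [Measure.restrict_add, integral_add_measure (integrable8 hf.1 _) (integrable8 hf.1 _),
    hI1, hI2, hsplit, hPf₀]

lemma squeeze8 {T : ℝ} (hT : 0 < T) {f g : ℕ → ℝ → ℝ} (hf : ConvZ8 T f)
    (h0 : ∀ k, ∀ x ∈ Set.Icc (-T) (0:ℝ), 0 ≤ g k x)
    (h1 : ∀ k, ∀ x ∈ Set.Icc (-T) (0:ℝ), g k x ≤ f k x) : ConvZ8 T g := by
  obtain ⟨⟨C, hC⟩, hu, hz⟩ := hf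
  have hm : (0:ℝ) ∈ Set.Icc (-T) 0 := ⟨by linarith, le_rfl⟩
  refine ⟨⟨C, fun k x hx => ?_⟩, fun K hK hKc => ?_, ?_⟩
  · rw [abs_of_nonneg (h0 k x hx)]
    exact (h1 k x hx).trans ((le_abs_self _).trans (hC k x hx))
  · have := hu K hK hKc
    rw [Metric.tendstoUniformlyOn_iff] at this ⊢
    intro e he
    filter_upwards [this e he] with n hn x hx
    have hx' : x ∈ Set.Icc (-T) 0 := Set.Ico_subset_Icc_self (hK hx)
    have h := hn x hx
    rw [Real.dist_eq, zero_sub, abs_neg] at h ⊢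
    rw [abs_of_nonneg (h0 n x hx')]
    exact (h1 n x hx').trans_lt ((le_abs_self _).trans_lt h)
  · exact squeeze_zero (fun k => h0 k 0 hm) (fun k => h1 k 0 hm) hz

lemma mem_add8 {T : ℝ} {f g : ℝ → ℝ} (hf : memScrC T f) (hg : memScrC T g) :
    memScrC T (f + g) := by
  obtain ⟨⟨C, hC⟩, hfc⟩ := hf
  obtain ⟨⟨D, hD⟩, hgc⟩ := hg
  exact ⟨⟨C + D, fun x hx => (abs_add_le _ _).trans (add_le_add (hC x hx) (hD x hx))⟩, hfc.add hgc⟩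

lemma mem_smul8 {T : ℝ} {f : ℝ → ℝ} (c : ℝ) (hf : memScrC T f) :
    memScrC T (c • f) := by
  obtain ⟨⟨C, hC⟩, hfc⟩ := hf
  refine ⟨⟨|c| * C, fun x hx => ?_⟩, hfc.const_smul c⟩
  rw [Pi.smul_apply, smul_eq_mul, abs_mul]
  exact mul_le_mul_of_nonneg_left (hC x hx) (abs_nonneg _)

lemma mem_sub8 {T : ℝ} {f g : ℝ → ℝ} (hf : memScrC T f) (hg : memScrC T g) :
    memScrC T (f - g) := by
  have := mem_add8 hf (mem_smul8 (-1) hg)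
  rwa [neg_one_smul, ← sub_eq_add_neg] at this

lemma mem_min8 {T : ℝ} {f g : ℝ → ℝ} (hf : memScrC T f) (hg : memScrC T g) :
    memScrC T (fun x => min (f x) (g x)) := by
  obtain ⟨⟨C, hC⟩, hfc⟩ := hf
  obtain ⟨⟨D, hD⟩, hgc⟩ := hg
  exact ⟨⟨max C D, fun x hx => (abs_min_le_max_abs_abs).trans (max_le_max (hC x hx) (hD x hx))⟩,
    ContinuousOn.inf hfc hgc⟩

lemma mem_zero8 (T : ℝ) : memScrC T 0 := ⟨⟨0, fun x _ => by simp⟩, continuousOn_const⟩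

lemma adm_zero8 (T : ℝ) : Adm8 T 0 := ⟨mem_zero8 T, fun _ _ => le_rfl⟩

lemma adm_add8 {T : ℝ} {f g : ℝ → ℝ} (hf : Adm8 T f) (hg : Adm8 T g) : Adm8 T (f + g) :=
  ⟨mem_add8 hf.1 hg.1, fun x hx => add_nonneg (hf.2 x hx) (hg.2 x hx)⟩

lemma adm_smul8 {T : ℝ} {f : ℝ → ℝ} {c : ℝ} (hc : 0 ≤ c) (hf : Adm8 T f) : Adm8 T (c • f) :=
  ⟨mem_smul8 c hf.1, fun x hx => mul_nonneg hc (hf.2 x hx)⟩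

open Pointwise in
lemma decomp8 (T : ℝ) (hT : 0 < T) (Λ : (ℝ → ℝ) → ℝ)
    (hadd : ∀ η ξ, memScrC T η → memScrC T ξ → Λ (η + ξ) = Λ η + Λ ξ)
    (hsmul : ∀ (c : ℝ) η, memScrC T η → Λ (c • η) = c * Λ η)
    (hcongr : ∀ f g, Set.EqOn f g (Set.Icc (-T) 0) → memScrC T f → memScrC T g → Λ f = Λ g)
    (hcont : ∀ g : ℕ → ℝ → ℝ, (∀ k, memScrC T (g k)) → ConvZ8 T g →
      Tendsto (fun k => Λ (g k)) atTop (𝓝 0)) :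
    ∃ Q R : (ℝ → ℝ) → ℝ, PosFun8 T Q ∧ PosFun8 T R ∧ ∀ f, Λ f = Q f - R f := by
  have hΛ0 : Λ 0 = 0 := by
    have := hsmul 0 0 (mem_zero8 T)
    simpa using this
  let S : (ℝ → ℝ) → Set ℝ := fun f =>
    {r | ∃ g, Adm8 T g ∧ (∀ x ∈ Set.Icc (-T) (0:ℝ), g x ≤ f x) ∧ Λ g = r}
  have hne : ∀ f, Adm8 T f → (0:ℝ) ∈ S f := fun f hf => ⟨0, adm_zero8 T, hf.2, hΛ0⟩
  have hself : ∀ f, Adm8 T f → Λ f ∈ S f := fun f hf => ⟨f, hf, fun _ _ => le_rfl, rfl⟩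
  have hbdd : ∀ f, Adm8 T f → BddAbove (S f) := by
    intro f hf
    by_contra hcon
    rw [not_bddAbove_iff] at hcon
    have : ∀ n : ℕ, ∃ g, Adm8 T g ∧ (∀ x ∈ Set.Icc (-T) (0:ℝ), g x ≤ f x) ∧ (n:ℝ) + 1 < Λ g := by
      intro n
      obtain ⟨r, ⟨g, h1, h2, rfl⟩, h3⟩ := hcon (n + 1)
      exact ⟨g, h1, h2, h3⟩
    choose g hg hgf hgΛ using this
    have hpos : ∀ n : ℕ, (0:ℝ) ≤ 1 / ((n:ℝ) + 1) := fun n => by positivity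
    have hlim : Tendsto (fun n : ℕ => 1 / ((n:ℝ) + 1)) atTop (𝓝 0) :=
      tendsto_one_div_add_atTop_nhds_zero_nat
    obtain ⟨C, hC⟩ := hf.1.1
    have hfz : ConvZ8 T fun n : ℕ => (1 / ((n:ℝ) + 1)) • f := by
      have hle : ∀ n : ℕ, ∀ x ∈ Set.Icc (-T) (0:ℝ),
          |((1 / ((n:ℝ) + 1)) • f) x| ≤ 1 / ((n:ℝ) + 1) * C := by
        intro n x hx
        rw [Pi.smul_apply, smul_eq_mul, abs_mul, abs_of_nonneg (hpos n)]
        exact mul_le_mul_of_nonneg_left (hC x hx) (hpos n)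
      have hm : (0:ℝ) ∈ Set.Icc (-T) 0 := ⟨by linarith, le_rfl⟩
      have hC0 : 0 ≤ C := (abs_nonneg _).trans (hC 0 hm)
      have hl2 : Tendsto (fun n : ℕ => 1 / ((n:ℝ) + 1) * C) atTop (𝓝 0) := by
        simpa using hlim.mul_const C
      refine ⟨⟨C, fun k x hx => (hle k x hx).trans ?_⟩, fun K hK _ => ?_, ?_⟩
      · have : 1 / ((k:ℝ) + 1) ≤ 1 := by
          rw [div_le_one (by positivity)]
          have : (0:ℝ) ≤ k := k.cast_nonneg
          linarith
        have := mul_le_mul_of_nonneg_right this hC0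
        linarith
      · rw [Metric.tendstoUniformlyOn_iff]
        intro e he
        filter_upwards [hl2.eventually (gt_mem_nhds he)] with n hn x hx
        rw [Real.dist_eq, zero_sub, abs_neg]
        exact (hle n x (Set.Ico_subset_Icc_self (hK hx))).trans_lt hn
      · exact squeeze_zero_norm (fun n => hle n 0 hm) hl2
    have hgz : ConvZ8 T fun n : ℕ => (1 / ((n:ℝ) + 1)) • g n :=
      squeeze8 hT hfz (fun k x hx => mul_nonneg (hpos k) ((hg k).2 x hx))
        (fun k x hx => mul_le_mul_of_nonneg_left (hgf k x hx) (hpos k))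
    have h1 := hcont _ (fun k => mem_smul8 _ (hg k).1) hgz
    have h2 : ∀ᶠ n : ℕ in atTop, Λ ((1 / ((n:ℝ) + 1)) • g n) < 1 :=
      h1.eventually (gt_mem_nhds one_pos)
    obtain ⟨n, hn⟩ := h2.exists
    rw [hsmul _ _ (hg n).1, one_div, inv_mul_lt_iff₀ (by positivity)] at hn
    linarith [hgΛ n]
  let Q : (ℝ → ℝ) → ℝ := fun f => sSup (S f)
  have hQ : PosFun8 T Q := by
    refine ⟨?_, ?_, ?_, ?_, ?_⟩
    · intro f g hfg _ _
      have : S f = S g := by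
        ext r
        constructor
        · rintro ⟨h, h1, h2, h3⟩
          exact ⟨h, h1, fun x hx => (h2 x hx).trans_eq (hfg hx), h3⟩
        · rintro ⟨h, h1, h2, h3⟩
          exact ⟨h, h1, fun x hx => (h2 x hx).trans_eq (hfg hx).symm, h3⟩
      simp only [Q, this]
    · intro f hf
      exact le_csSup (hbdd f hf) (hne f hf)
    · intro f g hf hg
      have : S (f + g) = S f + S g := by
        ext r
        rw [Set.mem_add]
        constructor
        · rintro ⟨h, h1, h2, rfl⟩
          have hm : memScrC T (fun x => min (h x) (f x)) := mem_min8 h1.1 hf.1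
          have hm2 := mem_sub8 h1.1 hm
          refine ⟨_, ⟨fun x => min (h x) (f x), ⟨hm, fun x hx => le_min (h1.2 x hx) (hf.2 x hx)⟩,
            fun x hx => min_le_right _ _, rfl⟩, _, ⟨h - fun x => min (h x) (f x), ⟨hm2,
            fun x hx => sub_nonneg.2 (min_le_left _ _)⟩, fun x hx => ?_, rfl⟩, ?_⟩
          · have h3 : h x ≤ f x + g x := h2 x hx
            have h4 := hg.2 x hx
            simp only [Pi.sub_apply]
            rcases min_choice (h x) (f x) with h5 | h5 <;> rw [h5] <;> linarith
          · rw [← hadd _ _ hm hm2]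
            congr 1
            abel
        · rintro ⟨_, ⟨h, h1, h2, rfl⟩, _, ⟨k, k1, k2, rfl⟩, rfl⟩
          exact ⟨h + k, adm_add8 h1 k1, fun x hx => add_le_add (h2 x hx) (k2 x hx),
            hadd _ _ h1.1 k1.1⟩
      simp only [Q]
      rw [this, csSup_add ⟨_, hne f hf⟩ (hbdd f hf) ⟨_, hne g hg⟩ (hbdd g hg)]
    · intro c f hc hf
      have : S (c • f) = c • S f := by
        ext r
        rw [Set.mem_smul_set]
        constructor
        · rintro ⟨h, h1, h2, rfl⟩
          rcases hc.eq_or_lt with rfl | hc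
          · refine ⟨0, hne f hf, ?_⟩
            rw [smul_zero, ← hΛ0]
            refine hcongr _ _ (fun x hx => ?_) (mem_zero8 T) h1.1
            have h3 := h2 x hx
            have h4 := h1.2 x hx
            simp only [Pi.smul_apply, zero_smul] at h3
            exact le_antisymm h4 h3
          · refine ⟨_, ⟨c⁻¹ • h, adm_smul8 (inv_nonneg.2 hc.le) h1, fun x hx => ?_, rfl⟩, ?_⟩
            · have h3 : h x ≤ c * f x := h2 x hx
              change c⁻¹ * h x ≤ f x
              rwa [inv_mul_le_iff₀ hc]
            · rw [hsmul _ _ h1.1, smul_eq_mul, mul_inv_cancel_left₀ hc.ne']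
        · rintro ⟨_, ⟨h, h1, h2, rfl⟩, rfl⟩
          exact ⟨c • h, adm_smul8 hc h1, fun x hx => mul_le_mul_of_nonneg_left (h2 x hx) hc,
            hsmul _ _ h1.1⟩
      simp only [Q]
      rw [this, Real.sSup_smul_of_nonneg hc, smul_eq_mul]
    · intro f hf hfz
      have : ∀ n : ℕ, ∃ g, Adm8 T g ∧ (∀ x ∈ Set.Icc (-T) (0:ℝ), g x ≤ f n x) ∧
          Q (f n) - 1 / ((n:ℝ) + 1) < Λ g := by
        intro n
        have hp : (0:ℝ) < 1 / ((n:ℝ) + 1) := by positivity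
        obtain ⟨r, ⟨g, h1, h2, rfl⟩, h3⟩ := exists_lt_of_lt_csSup ⟨_, hne (f n) (hf n)⟩
          (show Q (f n) - 1 / ((n:ℝ) + 1) < sSup (S (f n)) from sub_lt_self _ hp)
        exact ⟨g, h1, h2, h3⟩
      choose g hg hgf hgΛ using this
      have hgz := squeeze8 hT hfz (fun k => (hg k).2) hgf
      have h1 := (hcont g (fun k => (hg k).1) hgz).add
        (tendsto_one_div_add_atTop_nhds_zero_nat (𝕜 := ℝ))
      rw [add_zero] at h1
      refine squeeze_zero (fun n => le_csSup (hbdd _ (hf n)) (hne _ (hf n))) (fun n => ?_) h1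
      linarith [hgΛ n]
  refine ⟨Q, fun f => Q f - Λ f, hQ, ⟨?_, ?_, ?_, ?_, ?_⟩, fun f => by ring⟩
  · intro f g h hf hg
    rw [hQ.congr f g h hf hg, hcongr f g h hf.1 hg.1]
  · intro f hf
    exact sub_nonneg.2 (le_csSup (hbdd f hf) (hself f hf))
  · intro f g hf hg
    rw [hQ.add f g hf hg, hadd f g hf.1 hg.1]; ring
  · intro c f hc hf
    rw [hQ.smul c f hc hf, hsmul c f hf.1]; ring
  · intro g hg hgz
    simpa using (hQ.cont g hg hgz).sub (hcont g (fun k => (hg k).1) hgz)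

lemma signed8 (a b c d : Measure ℝ) [IsFiniteMeasure a] [IsFiniteMeasure b] [IsFiniteMeasure c]
    [IsFiniteMeasure d] :
    a.toSignedMeasure - b.toSignedMeasure = c.toSignedMeasure - d.toSignedMeasure ↔
      a + d = c + b := by
  rw [sub_eq_sub_iff_add_eq_add, ← Measure.toSignedMeasure_add, ← Measure.toSignedMeasure_add,
    Measure.toSignedMeasure_eq_toSignedMeasure_iff]

/-- Riesz-type representation for `𝒞([-T,0])`: every linear functional `Λ`, sequentially
continuous for the convergence of `𝒞([-T,0])` (uniform boundedness, uniform convergence on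
compacts of `[-T,0[`, convergence at `0`), is represented by a unique finite signed Borel
measure `μ` on `[-T,0]`: `Λη = ∫_{[-T,0]} η dμ`. -/
theorem stmt8 (T : ℝ) (hT : 0 < T) (Λ : (ℝ → ℝ) → ℝ)
    (hadd : ∀ η ξ, memScrC T η → memScrC T ξ → Λ (η + ξ) = Λ η + Λ ξ)
    (hsmul : ∀ (c : ℝ) η, memScrC T η → Λ (c • η) = c * Λ η)
    (hcont : ∀ (ηk : ℕ → ℝ → ℝ) (η : ℝ → ℝ),
      (∀ k, memScrC T (ηk k)) → memScrC T η →
      (∃ C, ∀ k, ∀ x ∈ Set.Icc (-T) (0:ℝ), |ηk k x| ≤ C) →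
      (∀ K ⊆ Set.Ico (-T) (0:ℝ), IsCompact K → TendstoUniformlyOn ηk η atTop K) →
      Tendsto (fun k => ηk k 0) atTop (𝓝 (η 0)) →
      Tendsto (fun k => Λ (ηk k)) atTop (𝓝 (Λ η))) :
    ∃! μ : MeasureTheory.SignedMeasure ℝ,
      μ.toJordanDecomposition.posPart (Set.Icc (-T) 0)ᶜ = 0 ∧
      μ.toJordanDecomposition.negPart (Set.Icc (-T) 0)ᶜ = 0 ∧
      ∀ η, memScrC T η →
        Λ η = (∫ x in Set.Icc (-T) 0, η x ∂μ.toJordanDecomposition.posPart) -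
              ∫ x in Set.Icc (-T) 0, η x ∂μ.toJordanDecomposition.negPart := by

  have hm : (0:ℝ) ∈ Set.Icc (-T) 0 := ⟨by linarith, le_rfl⟩
  have hcongr : ∀ f g, Set.EqOn f g (Set.Icc (-T) 0) → memScrC T f → memScrC T g → Λ f = Λ g := by
    intro f g h hf hg
    obtain ⟨C, hC⟩ := hf.1
    have h1 := hcont (fun _ => f) g (fun _ => hf) hg ⟨C, fun _ => hC⟩ (fun K hK _ => ?_) ?_
    · exact tendsto_nhds_unique tendsto_const_nhds h1
    · rw [Metric.tendstoUniformlyOn_iff]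
      intro e he
      refine Eventually.of_forall fun n x hx => ?_
      rw [h (Set.Ico_subset_Icc_self (hK hx)), dist_self]
      exact he
    · rw [h hm]
      exact tendsto_const_nhds
  have hΛ0 : Λ 0 = 0 := by
    have := hsmul 0 0 (mem_zero8 T)
    simpa using this
  have hcont0 : ∀ g : ℕ → ℝ → ℝ, (∀ k, memScrC T (g k)) → ConvZ8 T g →
      Tendsto (fun k => Λ (g k)) atTop (𝓝 0) := by
    intro g hg hz
    rw [← hΛ0]
    exact hcont g 0 hg (mem_zero8 T) hz.1 hz.2.1 hz.2.2
  obtain ⟨Q, R, hQ, hR, hQR⟩ := decomp8 T hT Λ hadd hsmul hcongr hcont0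
  obtain ⟨μp, hμp, hp0, hpI⟩ := posRep8 hT hQ
  obtain ⟨μn, hμn, hn0, hnI⟩ := posRep8 hT hR
  have hrep : ∀ η, memScrC T η → Λ η = (∫ x in Set.Icc (-T) 0, η x ∂μp) -
      ∫ x in Set.Icc (-T) 0, η x ∂μn := by
    intro η hη
    let η₂ : ℝ → ℝ := (-1 : ℝ) • fun x => min (η x) ((0 : ℝ → ℝ) x)
    have h2 : Adm8 T η₂ := by
      refine ⟨mem_smul8 _ (mem_min8 hη (mem_zero8 T)), fun x hx => ?_⟩
      have : min (η x) 0 ≤ 0 := min_le_right _ _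
      simpa [η₂] using this
    have h1 : Adm8 T (η + η₂) := by
      refine ⟨mem_add8 hη h2.1, fun x hx => ?_⟩
      have : min (η x) 0 ≤ η x := min_le_left _ _
      simp only [η₂, Pi.add_apply, Pi.smul_apply, smul_eq_mul, Pi.zero_apply]
      linarith
    have e1 : Λ (η + η₂) = _ := hQR _
    rw [hpI _ h1, hnI _ h1, hadd _ _ hη h2.1, hQR η₂, hpI _ h2, hnI _ h2] at e1
    simp only [Pi.add_apply] at e1
    rw [integral_add (integrable8 hη μp) (integrable8 h2.1 μp),
      integral_add (integrable8 hη μn) (integrable8 h2.1 μn)] at e1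
    linarith
  refine ⟨μp.toSignedMeasure - μn.toSignedMeasure, ⟨?_, ?_, ?_⟩, ?_⟩
  · obtain ⟨i, hi₁, hi₂, hi₃, hμ, hν⟩ :=
      (μp.toSignedMeasure - μn.toSignedMeasure).toJordanDecomposition_spec
    have hz : (μp.toSignedMeasure - μn.toSignedMeasure) (i ∩ (Set.Icc (-T) 0)ᶜ) = 0 := by
      rw [Measure.toSignedMeasure_sub_apply (hi₁.inter measurableSet_Icc.compl), measureReal_def,
        measureReal_def, measure_mono_null Set.inter_subset_right hp0,
        measure_mono_null Set.inter_subset_right hn0, sub_self]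
    rw [hμ, SignedMeasure.toMeasureOfZeroLE_apply _ _ _ measurableSet_Icc.compl]
    rw [ENNReal.coe_eq_zero]
    exact NNReal.eq hz
  · obtain ⟨i, hi₁, hi₂, hi₃, hμ, hν⟩ :=
      (μp.toSignedMeasure - μn.toSignedMeasure).toJordanDecomposition_spec
    have hz : -(μp.toSignedMeasure - μn.toSignedMeasure) (iᶜ ∩ (Set.Icc (-T) 0)ᶜ) = 0 := by
      rw [Measure.toSignedMeasure_sub_apply (hi₁.compl.inter measurableSet_Icc.compl), measureReal_def,
        measureReal_def, measure_mono_null Set.inter_subset_right hp0,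
        measure_mono_null Set.inter_subset_right hn0, sub_self, neg_zero]
    rw [hν, SignedMeasure.toMeasureOfLEZero_apply _ _ _ measurableSet_Icc.compl]
    rw [ENNReal.coe_eq_zero]
    exact NNReal.eq hz
  · intro η hη
    have hJ := (μp.toSignedMeasure - μn.toSignedMeasure).toSignedMeasure_toJordanDecomposition
    rw [JordanDecomposition.toSignedMeasure, signed8] at hJ
    have h1 := congrArg (fun m : Measure ℝ => ∫ x in Set.Icc (-T) 0, η x ∂m) hJ
    simp only [Measure.restrict_add] at h1
    rw [integral_add_measure (integrable8 hη _) (integrable8 hη _),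
      integral_add_measure (integrable8 hη _) (integrable8 hη _)] at h1
    rw [hrep η hη]
    linarith
  · rintro s ⟨hs1, hs2, hs3⟩
    rw [← s.toSignedMeasure_toJordanDecomposition, JordanDecomposition.toSignedMeasure, signed8]
    have hfull : ∀ m : Measure ℝ, m (Set.Icc (-T) 0)ᶜ = 0 → m.restrict (Set.Icc (-T) 0) = m :=
      fun m h => Measure.restrict_eq_self_of_ae_mem h
    apply ext_of_forall_integral_eq_of_IsFiniteMeasure
    intro f
    have hf : memScrC T f := ⟨⟨‖f‖, fun x _ => f.norm_coe_le_norm x⟩, f.continuous.continuousOn⟩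
    have h1 := hs3 f hf
    rw [hrep f hf, hfull _ hs1, hfull _ hs2, hfull _ hp0, hfull _ hn0] at h1
    rw [integral_add_measure (f.integrable _) (f.integrable _),
      integral_add_measure (f.integrable _) (f.integrable _)]
    linarith
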